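/- Let Ω and Ξ be measurable spaces, μ a probability measure on Ω, P* a probability measure on Ξ, X a nonempty set, θ ∈ [0,1], δ ∈ ℝ, and α₁, α₂ ≥ 0. For each ω ∈ Ω let P̂(ω) be a probability measure on Ξ and 𝒫(ω) a nonempty set of probability measures on Ξ, and let f : X × Ξ → ℝ be such that for every ω and x, f(x,·) is integrable with respect to P*, to P̂(ω), and to every P ∈ 𝒫(ω); assume moreover for each ω there is C(ω) with |∫ f(x,·) dP| ≤ C(ω) for all x ∈ X and all P ∈ {P*, P̂(ω)} ∪ 𝒫(ω). Define 𝒫'_θ(ω) := {(1−θ)·P̂(ω) + θ·Q : Q ∈ 𝒫(ω)}. If μ{ω : sup_{x∈X}(∫ f(x,·) dP* − ∫ f(x,·) dP̂(ω)) > δ} ≤ α₁ and μ{ω : sup_{x∈X}(∫ f(x,·) dP* − sup_{P∈𝒫(ω)} ∫ f(x,·) dP) > δ} ≤ α₂, then μ{ω : sup_{x∈X}(∫ f(x,·) dP* − sup_{P∈𝒫'_θ(ω)} ∫ f(x,·) dP) > δ} ≤ α₁ + α₂. -/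

import Mathlib

open MeasureTheory

/-- The mixture `(1-θ)·P + θ·Q` of two measures. -/
noncomputable def mix {Ξ : Type*} [MeasurableSpace Ξ] (θ : ℝ) (P Q : Measure Ξ) : Measure Ξ :=
  ENNReal.ofReal (1 - θ) • P + ENNReal.ofReal θ • Q

/-- Generalization bound for the TRO model: the probability that the TRO generalization
error exceeds `δ` is at most the sum of the SAA and DRO generalization-error bounds. -/
theorem tro_generalization_bound
    {Ω Ξ X : Type*} [MeasurableSpace Ω] [MeasurableSpace Ξ] [Nonempty X]
    (μ : Measure Ω) [IsProbabilityMeasure μ]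
    (Pstar : Measure Ξ) [IsProbabilityMeasure Pstar]
    (θ : ℝ) (hθ : θ ∈ Set.Icc (0:ℝ) 1) (δ : ℝ)
    (α₁ α₂ : ℝ) (hα₁ : 0 ≤ α₁) (hα₂ : 0 ≤ α₂)
    (Phat : Ω → Measure Ξ) (hPhat : ∀ ω, IsProbabilityMeasure (Phat ω))
    (𝒜 : Ω → Set (Measure Ξ)) (h𝒜ne : ∀ ω, (𝒜 ω).Nonempty)
    (h𝒜prob : ∀ ω, ∀ P ∈ 𝒜 ω, IsProbabilityMeasure P)
    (f : X → Ξ → ℝ)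
    (hintstar : ∀ x, Integrable (f x) Pstar)
    (hinthat : ∀ ω x, Integrable (f x) (Phat ω))
    (hint : ∀ ω x, ∀ P ∈ 𝒜 ω, Integrable (f x) P)
    (C : Ω → ℝ)
    (hCstar : ∀ ω x, |∫ ξ, f x ξ ∂Pstar| ≤ C ω)
    (hChat : ∀ ω x, |∫ ξ, f x ξ ∂(Phat ω)| ≤ C ω)
    (hCamb : ∀ ω x, ∀ P ∈ 𝒜 ω, |∫ ξ, f x ξ ∂P| ≤ C ω)
    (hSAA : μ {ω | δ < ⨆ x : X, ((∫ ξ, f x ξ ∂Pstar) - ∫ ξ, f x ξ ∂(Phat ω))} ≤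
      ENNReal.ofReal α₁)
    (hDRO : μ {ω | δ < ⨆ x : X,
        ((∫ ξ, f x ξ ∂Pstar) - ⨆ P : 𝒜 ω, ∫ ξ, f x ξ ∂(P : Measure Ξ))} ≤
      ENNReal.ofReal α₂) :
    μ {ω | δ < ⨆ x : X,
        ((∫ ξ, f x ξ ∂Pstar) -
          ⨆ P : 𝒜 ω, ∫ ξ, f x ξ ∂(mix θ (Phat ω) (P : Measure Ξ)))} ≤
      ENNReal.ofReal (α₁ + α₂) := by
  obtain ⟨h0, h1⟩ := hθ
  rw [ENNReal.ofReal_add hα₁ hα₂]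
  refine le_trans (le_trans (measure_mono ?_) (measure_union_le _ _)) (add_le_add hSAA hDRO)
  intro ω hω
  by_contra hcon
  simp only [Set.mem_union, Set.mem_setOf_eq, not_or, not_lt] at hcon hω
  obtain ⟨hA, hB⟩ := hcon
  haveI : Nonempty (𝒜 ω) := (h𝒜ne ω).to_subtype
  have hmix : ∀ x, ∀ P : 𝒜 ω, ∫ ξ, f x ξ ∂(mix θ (Phat ω) (P : Measure Ξ)) =
      (1 - θ) * (∫ ξ, f x ξ ∂(Phat ω)) + θ * ∫ ξ, f x ξ ∂(P : Measure Ξ) := by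
    intro x P
    unfold mix
    rw [integral_add_measure ((hinthat ω x).smul_measure ENNReal.ofReal_ne_top)
      ((hint ω x P P.2).smul_measure ENNReal.ofReal_ne_top), integral_smul_measure,
      integral_smul_measure, ENNReal.toReal_ofReal h0, ENNReal.toReal_ofReal (by linarith)]
    simp
  refine absurd hω (not_lt.mpr (ciSup_le fun x => ?_))
  have hA' : (∫ ξ, f x ξ ∂Pstar) - ∫ ξ, f x ξ ∂(Phat ω) ≤ δ := by
    refine le_trans (le_ciSup
      (f := fun x => (∫ ξ, f x ξ ∂Pstar) - ∫ ξ, f x ξ ∂(Phat ω)) ⟨C ω + C ω, ?_⟩ x) hA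
    rintro _ ⟨y, rfl⟩
    have a := abs_le.mp (hCstar ω y)
    have b := abs_le.mp (hChat ω y)
    dsimp only
    linarith [a.2, b.1]
  have hbd : ∀ y, BddAbove (Set.range fun P : 𝒜 ω => ∫ ξ, f y ξ ∂(P : Measure Ξ)) := by
    intro y
    refine ⟨C ω, ?_⟩
    rintro _ ⟨P, rfl⟩
    exact (abs_le.mp (hCamb ω y P P.2)).2
  have hB' : (∫ ξ, f x ξ ∂Pstar) - ⨆ P : 𝒜 ω, ∫ ξ, f x ξ ∂(P : Measure Ξ) ≤ δ := by
    refine le_trans (le_ciSup (f := fun x => (∫ ξ, f x ξ ∂Pstar) -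
      ⨆ P : 𝒜 ω, ∫ ξ, f x ξ ∂(P : Measure Ξ)) ⟨C ω + C ω, ?_⟩ x) hB
    rintro _ ⟨y, rfl⟩
    have a := abs_le.mp (hCstar ω y)
    obtain ⟨P⟩ := this
    have b := abs_le.mp (hCamb ω y P P.2)
    have c := le_ciSup (hbd y) P
    dsimp only at c ⊢
    linarith [a.2, b.1]
  simp only [hmix]
  have hS : θ * (⨆ P : 𝒜 ω, ∫ ξ, f x ξ ∂(P : Measure Ξ)) ≤
      (⨆ P : 𝒜 ω, ((1 - θ) * (∫ ξ, f x ξ ∂(Phat ω)) + θ * ∫ ξ, f x ξ ∂(P : Measure Ξ)))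
        - (1 - θ) * (∫ ξ, f x ξ ∂(Phat ω)) := by
    rw [Real.mul_iSup_of_nonneg h0]
    refine ciSup_le fun P => ?_
    have hb : BddAbove (Set.range fun P : 𝒜 ω =>
        (1 - θ) * (∫ ξ, f x ξ ∂(Phat ω)) + θ * ∫ ξ, f x ξ ∂(P : Measure Ξ)) := by
      refine ⟨(1 - θ) * (∫ ξ, f x ξ ∂(Phat ω)) + θ * C ω, ?_⟩
      rintro _ ⟨Q, rfl⟩
      have := mul_le_mul_of_nonneg_left (abs_le.mp (hCamb ω x Q Q.2)).2 h0
      dsimp only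
      linarith
    have c := le_ciSup hb P
    linarith
  have e1 := mul_le_mul_of_nonneg_left hA' (sub_nonneg.mpr h1)
  have e2 := mul_le_mul_of_nonneg_left hB' h0
  linarith
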